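/- Let ν be a lattice path and let μ, μ' be ν-paths. Then μ ⋖_ν μ' is a covering relation of the ν-Tamari lattice if and only if the ν-tree R(μ') is obtained from the ν-tree R(μ) by a right rotation. -/

import Mathlib

open scoped Classical

/-! Lattice paths: `true` = north step, `false` = east step. -/

def eastSteps (ν : List Bool) : ℕ := ν.count false
def northSteps (ν : List Bool) : ℕ := ν.count true

/-- Height at which the path first reaches abscissa `x`. -/
def heightAt : List Bool → ℕ → ℕ
  | _, 0 => 0
  | [], _ + 1 => 0
  | true :: rest, x + 1 => heightAt rest (x + 1) + 1
  | false :: rest, x + 1 => heightAt rest x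

/-- Lattice point of a path after `i` steps. -/
def pointAt (μ : List Bool) (i : ℕ) : ℕ × ℕ :=
  ((μ.take i).count false, (μ.take i).count true)

/-- The set `A_ν` of lattice points weakly above `ν`. -/
def APts (ν : List Bool) : Set (ℕ × ℕ) :=
  {p | p.1 ≤ eastSteps ν ∧ heightAt ν p.1 ≤ p.2 ∧ p.2 ≤ northSteps ν}

def Incompatible (ν : List Bool) (p q : ℕ × ℕ) : Prop :=
  (p.1 < q.1 ∧ p.2 < q.2 ∧ (q.1, p.2) ∈ APts ν) ∨
    (q.1 < p.1 ∧ q.2 < p.2 ∧ (p.1, q.2) ∈ APts ν)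

def Compatible (ν : List Bool) (p q : ℕ × ℕ) : Prop := ¬ Incompatible ν p q

def IsNuTree (ν : List Bool) (T : Set (ℕ × ℕ)) : Prop :=
  T ⊆ APts ν ∧ T.Pairwise (Compatible ν) ∧
    ∀ T', T' ⊆ APts ν → T'.Pairwise (Compatible ν) → T ⊆ T' → T' = T

def IsRightRotationAt (T T' : Set (ℕ × ℕ)) (q q' : ℕ × ℕ) : Prop :=
  ∃ x y x'' y', q = (x, y) ∧ q' = (x'', y') ∧ x < x'' ∧ y < y' ∧
    (x, y) ∈ T ∧ (x, y') ∈ T ∧ (x'', y) ∈ T ∧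
    (∀ b, y < b → b < y' → (x, b) ∉ T) ∧
    (∀ a, x < a → a < x'' → (a, y) ∉ T) ∧
    (∀ a, x < a → a < x'' → (a, y') ∉ T) ∧
    (∀ b, y < b → b < y' → (x'', b) ∉ T) ∧
    T' = (T \ {(x, y)}) ∪ {(x'', y')}

def IsRightRotation (T T' : Set (ℕ × ℕ)) : Prop :=
  ∃ q q', IsRightRotationAt T T' q q'

/-- Order relation of the rotation poset of ν-trees. -/
def TreeLE (ν : List Bool) : Set (ℕ × ℕ) → Set (ℕ × ℕ) → Prop :=
  Relation.ReflTransGen fun A B => IsNuTree ν A ∧ IsNuTree ν B ∧ IsRightRotation A B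

def IsNuPath (ν μ : List Bool) : Prop :=
  eastSteps μ = eastSteps ν ∧ northSteps μ = northSteps ν ∧
    ∀ i ≤ μ.length, pointAt μ i ∈ APts ν

noncomputable def horiz (ν : List Bool) (p : ℕ × ℕ) : ℕ :=
  sSup {k | (p.1 + k, p.2) ∈ APts ν}

/-- Covering relation of the ν-Tamari lattice. -/
def TamariCover (ν μ μ' : List Bool) : Prop :=
  IsNuPath ν μ ∧ IsNuPath ν μ' ∧
    ∃ i j, 0 < i ∧ i < j ∧ j ≤ μ.length ∧
      μ.getD (i - 1) true = false ∧ μ.getD i false = true ∧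
      horiz ν (pointAt μ j) = horiz ν (pointAt μ i) ∧
      (∀ k, i < k → k < j → horiz ν (pointAt μ k) ≠ horiz ν (pointAt μ i)) ∧
      μ' = μ.take (i - 1) ++ (μ.drop i).take (j - i) ++ [false] ++ μ.drop j

def TamariLE (ν : List Bool) : List Bool → List Bool → Prop :=
  Relation.ReflTransGen (TamariCover ν)

/-! Flushing maps -/

def rowAvail (ν : List Bool) (y : ℕ) : List ℕ :=
  ((List.range (eastSteps ν + 1)).filter fun x => decide (heightAt ν x ≤ y)).reverse

def pointsAtHeight (μ : List Bool) (y : ℕ) : ℕ :=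
  ((List.range (μ.length + 1)).filter fun i => decide ((μ.take i).count true = y)).length

def rflushAux (ν : List Bool) : List ℕ → ℕ → List ℕ → List (ℕ × ℕ)
  | [], _, _ => []
  | c :: rest, y, forbidden =>
    let placed := ((rowAvail ν y).filter fun x => decide (x ∉ forbidden)).take c
    placed.map (fun x => (x, y)) ++ rflushAux ν rest (y + 1) (forbidden ++ placed.dropLast)

/-- Right-flushing map `R`. -/
def Rflush (ν μ : List Bool) : Set (ℕ × ℕ) :=
  {p | p ∈ rflushAux ν ((List.range (northSteps ν + 1)).map (pointsAtHeight μ)) 0 []}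

def lflushAux (m : ℕ) : List ℕ → ℕ → List ℕ → List (ℕ × ℕ)
  | [], _, _ => []
  | c :: rest, y, forbidden =>
    let placed := ((List.range (m + 1)).filter fun x => decide (x ∉ forbidden)).take c
    placed.map (fun x => (x, y)) ++ lflushAux m rest (y + 1) (forbidden ++ placed.dropLast)

noncomputable def rowCount (T : Set (ℕ × ℕ)) (y : ℕ) : ℕ := {x | (x, y) ∈ T}.ncard

/-- Left-flushing map `L`. -/
noncomputable def Lflush (ν : List Bool) (T : Set (ℕ × ℕ)) : Set (ℕ × ℕ) :=
  {p | p ∈ lflushAux (eastSteps ν) ((List.range (northSteps ν + 1)).map (rowCount T)) 0 []}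

def pathPointSet (μ : List Bool) : Set (ℕ × ℕ) := {p | ∃ i ≤ μ.length, pointAt μ i = p}

/-! Bracket vectors (0-indexed positions `0,…,ℓ`). -/

noncomputable def fpos (ν : List Bool) (k : ℕ) : ℕ :=
  sSup {i | i ≤ ν.length ∧ (ν.take i).count true = k}

def bmin (ν : List Bool) : List ℕ :=
  (List.range (ν.length + 1)).map fun i => (ν.take i).count true

def IsBracketVector (ν : List Bool) (b : List ℕ) : Prop :=
  b.length = ν.length + 1 ∧
    (∀ k ≤ northSteps ν, b.getD (fpos ν k) 0 = k) ∧
    (∀ i < b.length, (bmin ν).getD i 0 ≤ b.getD i 0 ∧ b.getD i 0 ≤ northSteps ν) ∧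
    ∀ i j k, i < j → j < k → k < b.length →
      ¬(b.getD i 0 = b.getD k 0 ∧ b.getD i 0 < b.getD j 0)

noncomputable def leftChild (T : Set (ℕ × ℕ)) (p : ℕ × ℕ) : Option (ℕ × ℕ) :=
  if ∃ b, (p.1, b) ∈ T ∧ b < p.2 then some (p.1, sSup {b | (p.1, b) ∈ T ∧ b < p.2})
  else none

noncomputable def rightChild (T : Set (ℕ × ℕ)) (p : ℕ × ℕ) : Option (ℕ × ℕ) :=
  if ∃ a, (a, p.2) ∈ T ∧ p.1 < a then
    if ∃ b, (sInf {a | (a, p.2) ∈ T ∧ p.1 < a}, b) ∈ T ∧ p.2 < b then none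
    else some (sInf {a | (a, p.2) ∈ T ∧ p.1 < a}, p.2)
  else none

noncomputable def inorderAux (T : Set (ℕ × ℕ)) : ℕ → ℕ × ℕ → List (ℕ × ℕ)
  | 0, _ => []
  | fuel + 1, p =>
    (match leftChild T p with
      | none => []
      | some l => inorderAux T fuel l) ++ p ::
      (match rightChild T p with
        | none => []
        | some r => inorderAux T fuel r)

/-- Bracket vector of a ν-tree: y-coordinates read in in-order from the root `(0,n)`. -/
noncomputable def bracketOfTree (ν : List Bool) (T : Set (ℕ × ℕ)) : List ℕ :=
  (inorderAux T T.ncard (0, northSteps ν)).map Prod.snd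

noncomputable def bracketAssign (ν μ : List Bool) : List (ℕ × ℕ) :=
  ((List.range (northSteps ν + 1)).foldl
    (fun (st : List (ℕ × ℕ) × List ℕ) k =>
      let picked := ((st.2.filter fun i => decide (i ≤ fpos ν k)).reverse).take
        (pointsAtHeight μ k)
      (st.1 ++ picked.map fun i => (i, k), st.2.filter fun i => decide (i ∉ picked)))
    ([], List.range (ν.length + 1))).1

/-- Bracket vector of a ν-path. -/
noncomputable def bracketOfPath (ν μ : List Bool) : List ℕ :=
  (List.range (ν.length + 1)).map fun i => ((bracketAssign ν μ).lookup i).getD 0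

/-- Componentwise order on (equal length) integer vectors. -/
def listLE (b b' : List ℕ) : Prop :=
  b.length = b'.length ∧ ∀ i, b.getD i 0 ≤ b'.getD i 0

/-! Reversal -/

def revPath (ν : List Bool) : List Bool := ν.reverse.map fun s => !s

def revTree (ν : List Bool) (T : Set (ℕ × ℕ)) : Set (ℕ × ℕ) :=
  (fun p : ℕ × ℕ => (northSteps ν - p.2, eastSteps ν - p.1)) '' T

/-! Pipe dreams and subword complexes -/

def dOf (ν : List Bool) (p : ℕ × ℕ) : ℕ := p.1 + (northSteps ν - p.2)

def labelPerm (ν : List Bool) (p : ℕ × ℕ) : Equiv.Perm ℕ :=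
  Equiv.swap (dOf ν p + 1) (dOf ν p + 2)

/-- The points of `A_ν` in reading order: rows from bottom to top, each left to right. -/
def readingList (ν : List Bool) : List (ℕ × ℕ) :=
  ((List.range (northSteps ν + 1)).map fun y =>
    ((List.range (eastSteps ν + 1)).filter fun x => decide (heightAt ν x ≤ y)).map
      fun x => (x, y)).flatten

/-- The minimal ν-tree. -/
def TminSet (ν : List Bool) : Set (ℕ × ℕ) :=
  {p | p ∈ APts ν ∧ (p.1 = 0 ∨ ∃ i < ν.length, ν.getD i true = false ∧ p = pointAt ν (i + 1))}

noncomputable def prodOver (ν : List Bool) (C : Set (ℕ × ℕ)) : Equiv.Perm ℕ :=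
  (((readingList ν).filter fun p => decide (p ∈ C)).map (labelPerm ν)).prod

/-- Coxeter length: number of inversions. -/
noncomputable def lenInv (π : Equiv.Perm ℕ) : ℕ :=
  {q : ℕ × ℕ | q.1 < q.2 ∧ π q.2 < π q.1}.ncard

noncomputable def piNu (ν : List Bool) : Equiv.Perm ℕ := prodOver ν (APts ν \ TminSet ν)

def Qword (ν : List Bool) : List (Equiv.Perm ℕ) := (readingList ν).map (labelPerm ν)

noncomputable def prodAt (Q : List (Equiv.Perm ℕ)) (P : Finset ℕ) : Equiv.Perm ℕ :=
  (((List.range Q.length).filter fun i => decide (i ∈ P)).map fun i => Q.getD i 1).prod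

def IsFacet (Q : List (Equiv.Perm ℕ)) (π : Equiv.Perm ℕ) (I : Finset ℕ) : Prop :=
  I ⊆ Finset.range Q.length ∧
    prodAt Q (Finset.range Q.length \ I) = π ∧
    (Finset.range Q.length \ I).card = lenInv π

def IncFlip (Q : List (Equiv.Perm ℕ)) (π : Equiv.Perm ℕ) (I J : Finset ℕ) : Prop :=
  IsFacet Q π I ∧ IsFacet Q π J ∧ ∃ i ∈ I, ∃ j ∈ J, i < j ∧ I.erase i = J.erase j

def FlipLE (Q : List (Equiv.Perm ℕ)) (π : Equiv.Perm ℕ) : Finset ℕ → Finset ℕ → Prop :=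
  Relation.ReflTransGen (IncFlip Q π)

/-- The maximal ν-tree. -/
def TmaxSet (ν : List Bool) : Set (ℕ × ℕ) :=
  {p | (p.1 ≤ eastSteps ν ∧ p.2 = northSteps ν) ∨ ∃ i < ν.length, ν.getD i false = true ∧ p = pointAt ν i}

/-! ### Abstract right flushing -/

structure Flushing (n : ℕ) (M a : ℕ → ℕ) (P F : ℕ → Finset ℕ) (l : ℕ → ℕ) : Prop where
  F0 : F 0 = ∅
  lM : ∀ y ≤ n, l y ≤ M y
  lF : ∀ y ≤ n, l y ∉ F y
  hP : ∀ y ≤ n, ∀ x, x ∈ P y ↔ l y ≤ x ∧ x ≤ M y ∧ x ∉ F y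
  hF : ∀ y ≤ n, ∀ x, x ∈ F (y + 1) ↔ x ∈ F y ∨ (x ∈ P y ∧ x ≠ l y)
  cP : ∀ y ≤ n, (P y).card = a y + 1

namespace Flushing

variable {n : ℕ} {M a : ℕ → ℕ} {P F : ℕ → Finset ℕ} {l : ℕ → ℕ}

theorem l_mem (h : Flushing n M a P F l) {y : ℕ} (hy : y ≤ n) : l y ∈ P y :=
  (h.hP y hy _).2 ⟨le_rfl, h.lM y hy, h.lF y hy⟩

theorem F_mono (h : Flushing n M a P F l) {y k : ℕ} (hyk : y ≤ k) (hk : k ≤ n + 1) :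
    F y ⊆ F k := by
  induction k, hyk using Nat.le_induction with
  | base => exact fun _ hx => hx
  | succ k hyk ih =>
    intro x hx
    exact (h.hF k (by omega) x).2 (Or.inl (ih (by omega) hx))

theorem card_F (h : Flushing n M a P F l) : ∀ y ≤ n + 1,
    (F y).card = ∑ k ∈ Finset.range y, a k := by
  intro y
  induction y with
  | zero => intro _; simp [h.F0]
  | succ y ih =>
    intro hy
    have hy' : y ≤ n := by omega
    have e : F (y + 1) = F y ∪ (P y).erase (l y) := by
      ext x
      rw [h.hF y hy', Finset.mem_union, Finset.mem_erase]
      tauto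
    have d : Disjoint (F y) ((P y).erase (l y)) := by
      rw [Finset.disjoint_left]
      intro x hx hx'
      exact ((h.hP y hy' x).1 (Finset.mem_of_mem_erase hx')).2.2 hx
    rw [e, Finset.card_union_of_disjoint d, ih (by omega),
      Finset.card_erase_of_mem (h.l_mem hy'), h.cP y hy', Finset.sum_range_succ]
    simp

theorem F_le (h : Flushing n M a P F l) (hM : Monotone M) : ∀ y ≤ n, ∀ x ∈ F (y + 1), x ≤ M y := by
  intro y
  induction y with
  | zero =>
    intro hy x hx
    rcases (h.hF 0 hy x).1 hx with hx | hx
    · simp [h.F0] at hx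
    · exact ((h.hP 0 hy x).1 hx.1).2.1
  | succ y ih =>
    intro hy x hx
    rcases (h.hF _ hy x).1 hx with hx | hx
    · exact (ih (by omega) x hx).trans (hM (by omega))
    · exact ((h.hP _ hy x).1 hx.1).2.1

/-- Free positions after row `k`. -/
theorem card_free (h : Flushing n M a P F l) (hM : Monotone M) {k : ℕ} (hk : k ≤ n) :
    (Finset.range (M k + 1) \ F (k + 1)).card + ∑ j ∈ Finset.range (k + 1), a j = M k + 1 := by
  have hs : F (k + 1) ⊆ Finset.range (M k + 1) := by
    intro x hx
    have := h.F_le hM k hk x hx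
    simp; omega
  have := Finset.card_sdiff_add_card_eq_card hs
  rw [h.card_F (k + 1) (by omega), Finset.card_range] at this
  exact this

theorem free_le (h : Flushing n M a P F l) {k : ℕ} (hk : k ≤ n) {x : ℕ} (hx : x ≤ M k)
    (hxF : x ∉ F (k + 1)) : x ≤ l k := by
  by_contra hlt
  apply hxF
  rw [h.hF k hk]
  by_cases hF : x ∈ F k
  · exact Or.inl hF
  · exact Or.inr ⟨(h.hP k hk x).2 ⟨by omega, hx, hF⟩, by omega⟩

theorem F_stable (h : Flushing n M a P F l) {k : ℕ} (hk : k ≤ n) {x : ℕ} (hx : x ≤ l k) :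
    x ∈ F (k + 1) ↔ x ∈ F k := by
  rw [h.hF k hk]
  refine ⟨?_, Or.inl⟩
  rintro (h1 | ⟨h1, h2⟩)
  · exact h1
  · have := ((h.hP k hk x).1 h1).1
    omega

theorem F_stable' (h : Flushing n M a P F l) {y k : ℕ} (hyk : y + 1 ≤ k) (hk : k ≤ n + 1)
    (hb : ∀ b, y < b → b < k → l y < l b) {x : ℕ} (hx : x ≤ l y) :
    x ∈ F k ↔ x ∈ F (y + 1) := by
  induction k, hyk using Nat.le_induction with
  | base => rfl
  | succ k hyk ih =>
    rw [h.F_stable (by omega) (by have := hb k (by omega) (by omega); omega)]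
    exact ih (by omega) fun b h1 h2 => hb b h1 (by omega)

theorem l_not_F (h : Flushing n M a P F l) {y k : ℕ} (hyk : y < k) (hk : k ≤ n + 1)
    (hb : ∀ b, y < b → b < k → l y < l b) : l y ∉ F k := by
  rw [h.F_stable' hyk hk hb le_rfl, h.F_stable (by omega) le_rfl]
  exact h.lF y (by omega)

theorem l_mem_iff (h : Flushing n M a P F l) (hM : Monotone M) {y k : ℕ} (hyk : y < k) (hk : k ≤ n)
    (hb : ∀ b, y < b → b < k → l y < l b) : l y ∈ P k ↔ l k ≤ l y := by
  rw [h.hP k hk]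
  have h1 := h.l_not_F hyk (by omega) hb
  have h2 := h.lM y (by omega)
  have h3 : M y ≤ M k := hM hyk.le
  constructor
  · exact fun h => h.1
  · exact fun h => ⟨h, by omega, h1⟩

theorem le_iff (h : Flushing n M a P F l) (hM : Monotone M) {y k : ℕ} (hyk : y < k) (hk : k ≤ n)
    (hb : ∀ b, y < b → b < k → l y < l b) :
    l k ≤ l y ↔ M k + ∑ j ∈ Finset.range (y + 1), a j ≤ M y + ∑ j ∈ Finset.range (k + 1), a j := by
  have cy := h.card_free hM (k := y) (by omega)
  have ck := h.card_free hM hk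
  have hMM : M y ≤ M k := hM hyk.le
  constructor
  · intro hl
    have : (Finset.range (M k + 1) \ F (k + 1)) ⊆ (Finset.range (M y + 1) \ F (y + 1)) := by
      intro x hx
      simp only [Finset.mem_sdiff, Finset.mem_range] at hx ⊢
      have h1 := h.free_le hk (x := x) (by omega) hx.2
      have h2 := hx.2
      rw [h.F_stable hk h1, h.F_stable' hyk (by omega) hb (by omega)] at h2
      have := h.lM y (by omega)
      exact ⟨by omega, h2⟩
    have := Finset.card_le_card this
    omega
  · contrapose!
    intro hl
    have : (Finset.range (M y + 1) \ F (y + 1)) ⊂ (Finset.range (M k + 1) \ F (k + 1)) := by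
      rw [Finset.ssubset_iff_of_subset]
      · refine ⟨l k, ?_, ?_⟩
        · simp only [Finset.mem_sdiff, Finset.mem_range]
          have := h.lM k hk
          refine ⟨by omega, ?_⟩
          rw [h.F_stable hk le_rfl]
          exact h.lF k hk
        · simp only [Finset.mem_sdiff, Finset.mem_range]
          rintro ⟨h1, h2⟩
          have := h.free_le (k := y) (by omega) (x := l k) (by omega) h2
          omega
      · intro x hx
        simp only [Finset.mem_sdiff, Finset.mem_range] at hx ⊢
        have h1 := h.free_le (k := y) (by omega) (x := x) (by omega) hx.2
        refine ⟨by omega, ?_⟩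
        rw [h.F_stable hk (by omega), h.F_stable' hyk (by omega) hb h1]
        exact hx.2
    have := Finset.card_lt_card this
    omega

theorem between_iff (h : Flushing n M a P F l) (hM : Monotone M) {y k : ℕ} (hk : k ≤ n + 1) :
    (∀ b, y < b → b < k → l y < l b) ↔
    (∀ b, y < b → b < k → M y + ∑ j ∈ Finset.range (b + 1), a j <
      M b + ∑ j ∈ Finset.range (y + 1), a j) := by
  constructor
  · intro H b h1 h2
    have := h.le_iff hM h1 (by omega) (fun b' h3 h4 => H b' h3 (by omega))
    have := H b h1 h2
    omega
  · intro H b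
    induction b using Nat.strong_induction_on with
    | _ b ih =>
      intro h1 h2
      have := h.le_iff hM h1 (by omega) (fun b' h3 h4 => ih b' h4 h3 (by omega))
      have := H b h1 h2
      omega

theorem between_iff' (h : Flushing n M a P F l) (hM : Monotone M) {y k : ℕ} (hk : k ≤ n + 1) :
    (∀ b, y < b → b < k → l y < l b) ↔ (∀ b, y < b → b < k → l y ∉ P b) := by
  constructor
  · intro H b h1 h2
    have h5 := h.l_mem_iff hM h1 (by omega) (fun b' h3 h4 => H b' h3 (by omega))
    have := H b h1 h2
    rw [h5]
    omega
  · intro H b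
    induction b using Nat.strong_induction_on with
    | _ b ih =>
      intro h1 h2
      have h3 := h.l_mem_iff hM h1 (by omega) (fun b' h3 h4 => ih b' h4 h3 (by omega))
      have h4 := H b h1 h2
      rw [h3] at h4
      omega

theorem top_unique {S : Finset ℕ} {u v : ℕ} (hu : u ∈ S) (hv : v ∈ S)
    (h : (S.filter (u ≤ ·)).card = (S.filter (v ≤ ·)).card) : u = v := by
  have key : ∀ u v : ℕ, u ∈ S → u < v → (S.filter (v ≤ ·)).card < (S.filter (u ≤ ·)).card := by
    intro u v hu huv
    apply Finset.card_lt_card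
    rw [Finset.ssubset_iff_of_subset]
    · exact ⟨u, by simp [hu], by simp; omega⟩
    · intro x
      simp only [Finset.mem_filter]
      rintro ⟨h1, h2⟩
      exact ⟨h1, by omega⟩
  rcases lt_trichotomy u v with h1 | h1 | h1
  · have := key u v hu h1; omega
  · exact h1
  · have := key v u hv h1; omega

theorem P_eq (h : Flushing n M a P F l) {y : ℕ} (hy : y ≤ n) :
    P y = (Finset.range (M y + 1) \ F y).filter (l y ≤ ·) := by
  ext x
  rw [h.hP y hy]
  simp only [Finset.mem_filter, Finset.mem_sdiff, Finset.mem_range, Nat.lt_succ_iff]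
  tauto

theorem l_mem_S (h : Flushing n M a P F l) {y : ℕ} (hy : y ≤ n) :
    l y ∈ Finset.range (M y + 1) \ F y := by
  have := h.lM y hy
  have := h.lF y hy
  simp only [Finset.mem_sdiff, Finset.mem_range]
  exact ⟨by omega, this⟩

/-- recognise the leftmost point of a row -/
theorem l_eq (h : Flushing n M a P F l) {y : ℕ} (hy : y ≤ n) {v : ℕ} (h1 : v ≤ M y) (h2 : v ∉ F y)
    (h3 : ((Finset.range (M y + 1) \ F y).filter (v ≤ ·)).card = a y + 1) : l y = v := by
  apply top_unique (h.l_mem_S hy) (v := v)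
  · simp only [Finset.mem_sdiff, Finset.mem_range]
    exact ⟨by omega, h2⟩
  · rw [h3, ← h.cP y hy, ← h.P_eq hy]

/-- Combinatorial covering relation. -/
def Cov (n : ℕ) (M a a' : ℕ → ℕ) (y y' : ℕ) : Prop :=
  y < y' ∧ y' ≤ n ∧ 1 ≤ a y ∧
  (∀ b, y < b → b < y' → M y + ∑ j ∈ Finset.range (b + 1), a j <
      M b + ∑ j ∈ Finset.range (y + 1), a j) ∧
  M y' + ∑ j ∈ Finset.range (y + 1), a j ≤ M y + ∑ j ∈ Finset.range (y' + 1), a j ∧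
  ∀ k ≤ n, a' k + (if k = y then 1 else 0) = a k + (if k = y' then 1 else 0)

theorem cov_of_rot {a' : ℕ → ℕ} {P' F' : ℕ → Finset ℕ} {l' : ℕ → ℕ}
    (h : Flushing n M a P F l) (h' : Flushing n M a' P' F' l') (hM : Monotone M)
    (hrot : IsRightRotation {p | p.2 ≤ n ∧ p.1 ∈ P p.2} {p | p.2 ≤ n ∧ p.1 ∈ P' p.2}) :
    ∃ y y', Cov n M a a' y y' := by
  obtain ⟨_, _, x, y, x2, y', rfl, rfl, hx, hy, hq, hp, hr, h1, h2, h3, h4, heq⟩ := hrot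
  simp only [Set.mem_ofPred_eq] at hq hp hr
  have hlx : l y ≤ x := ((h.hP y hq.1 x).1 hq.2).1
  have hl : x = l y := by
    by_contra hne
    have : x ∈ F (y + 1) := (h.hF y hq.1 x).2 (Or.inr ⟨hq.2, hne⟩)
    have := h.F_mono (y := y + 1) (k := y') hy (by omega) this
    exact ((h.hP y' hp.1 x).1 hp.2).2.2 this
  subst hl
  have hx2 : x2 ∉ P y' := by
    intro hx2
    have : x2 ∈ F (y + 1) := (h.hF y hq.1 x2).2 (Or.inr ⟨hr.2, by omega⟩)
    have := h.F_mono (y := y + 1) (k := y') hy (by omega) this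
    exact ((h.hP y' hp.1 x2).1 hx2).2.2 this
  have hb : ∀ b, y < b → b < y' → l y < l b := by
    rw [h.between_iff' hM (by omega)]
    intro b hb1 hb2 hmem
    exact h1 b hb1 hb2 ⟨by simp; omega, hmem⟩
  refine ⟨y, y', hy, hp.1, ?_, (h.between_iff hM (by omega)).1 hb, ?_, ?_⟩
  · have : ({l y, x2} : Finset ℕ) ⊆ P y := by
      intro z hz
      simp only [Finset.mem_insert, Finset.mem_singleton] at hz
      rcases hz with rfl | rfl
      · exact hq.2
      · exact hr.2
    have := Finset.card_le_card this
    rw [Finset.card_pair (by omega), h.cP y hq.1] at this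
    omega
  · rw [← h.le_iff hM hy hp.1 hb, ← h.l_mem_iff hM hy hp.1 hb]
    exact hp.2
  · intro k hk
    have hmem : ∀ x, x ∈ P' k ↔ (x ∈ P k ∧ ¬ (x = l y ∧ k = y)) ∨ (x = x2 ∧ k = y') := by
      intro x
      have := Set.ext_iff.1 heq (x, k)
      simp only [Set.mem_ofPred_eq, Set.mem_union, Set.mem_sdiff, Set.mem_singleton_iff,
        Prod.mk.injEq, hk, true_and] at this
      exact this
    have c1 := h.cP k hk
    have c2 := h'.cP k hk
    by_cases k1 : k = y
    · subst k1
      have : P' k = (P k).erase (l k) := by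
        ext x
        rw [hmem, Finset.mem_erase]
        have : k ≠ y' := by omega
        tauto
      rw [this, Finset.card_erase_of_mem hq.2] at c2
      have : k ≠ y' := by omega
      have : 0 < (P k).card := Finset.card_pos.2 ⟨_, hq.2⟩
      simp [*]; omega
    · by_cases k2 : k = y'
      · subst k2
        have : P' k = insert x2 (P k) := by
          ext x
          rw [hmem, Finset.mem_insert]
          tauto
        rw [this, Finset.card_insert_of_notMem hx2] at c2
        simp [*]; omega
      · have : P' k = P k := by
          ext x
          rw [hmem]
          tauto
        rw [this] at c2
        simp [*]; omega

theorem rot_of_cov {a' : ℕ → ℕ} {P' F' : ℕ → Finset ℕ} {l' : ℕ → ℕ}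
    (h : Flushing n M a P F l) (h' : Flushing n M a' P' F' l') (hM : Monotone M)
    {y y' : ℕ} (hc : Cov n M a a' y y') :
    IsRightRotation {p | p.2 ≤ n ∧ p.1 ∈ P p.2} {p | p.2 ≤ n ∧ p.1 ∈ P' p.2} := by
  obtain ⟨hy, hyn, ha, hb, hl, hcnt⟩ := hc
  rw [← h.between_iff hM (by omega)] at hb
  rw [← h.le_iff hM hy hyn hb] at hl
  have hyn' : y ≤ n := by omega
  -- the second leftmost point
  have hne : ((P y).erase (l y)).Nonempty := by
    rw [← Finset.card_pos, Finset.card_erase_of_mem (h.l_mem hyn'), h.cP y hyn']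
    omega
  obtain ⟨x2, hx2m, hx2min⟩ : ∃ x2 ∈ (P y).erase (l y), ∀ z ∈ (P y).erase (l y), x2 ≤ z :=
    ⟨_, Finset.min'_mem _ hne, fun z hz => Finset.min'_le _ z hz⟩
  rw [Finset.mem_erase] at hx2m
  have hx2P := (h.hP y hyn' x2).1 hx2m.2
  have hlx2 : l y < x2 := by have := hx2m.1; omega
  have hx2F : ∀ k, y < k → k ≤ n + 1 → x2 ∈ F k := by
    intro k h1 h2
    exact h.F_mono (y := y + 1) h1 h2 ((h.hF y hyn' x2).2 (Or.inr ⟨hx2m.2, hx2m.1⟩))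
  -- rows
  have step_same : ∀ k ≤ n, F' k = F k → a' k = a k → l' k = l k ∧ P' k = P k ∧
      F' (k + 1) = F (k + 1) := by
    intro k hk hF hA
    have e1 : l' k = l k := by
      apply h'.l_eq hk (h.lM k hk) (by rw [hF]; exact h.lF k hk)
      rw [hF, ← h.P_eq hk, hA, h.cP k hk]
    have e2 : P' k = P k := by rw [h'.P_eq hk, h.P_eq hk, hF, e1]
    refine ⟨e1, e2, ?_⟩
    ext x
    rw [h'.hF k hk, h.hF k hk, hF, e2, e1]
  have below : ∀ k ≤ y, F' k = F k := by
    intro k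
    induction k with
    | zero => intro _; rw [h.F0, h'.F0]
    | succ k ih =>
      intro hk
      refine (step_same k (by omega) (ih (by omega)) ?_).2.2
      have := hcnt k (by omega)
      rw [if_neg (by omega), if_neg (by omega)] at this
      omega
  have rowy : P' y = (P y).erase (l y) ∧ F' (y + 1) = (F (y + 1)).erase x2 := by
    have hF := below y le_rfl
    have hfil : (Finset.range (M y + 1) \ F y).filter (x2 ≤ ·) = (P y).erase (l y) := by
      ext z
      constructor
      · intro hz
        simp only [Finset.mem_filter, Finset.mem_sdiff, Finset.mem_range] at hz
        rw [Finset.mem_erase, h.hP y hyn']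
        exact ⟨by omega, by omega, by omega, hz.1.2⟩
      · intro hz
        have h1 := hx2min z hz
        rw [Finset.mem_erase, h.hP y hyn'] at hz
        simp only [Finset.mem_filter, Finset.mem_sdiff, Finset.mem_range]
        exact ⟨⟨by omega, hz.2.2.2⟩, h1⟩
    have hA := hcnt y hyn'
    rw [if_pos rfl, if_neg (by omega)] at hA
    have e1 : l' y = x2 := by
      apply h'.l_eq hyn' hx2P.2.1 (by rw [hF]; exact hx2P.2.2)
      rw [hF, hfil, Finset.card_erase_of_mem (h.l_mem hyn'), h.cP y hyn']
      omega
    have e2 : P' y = (P y).erase (l y) := by rw [h'.P_eq hyn', hF, e1, hfil]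
    refine ⟨e2, ?_⟩
    ext z
    rw [h'.hF y hyn', Finset.mem_erase, h.hF y hyn', e2, e1, hF, Finset.mem_erase]
    have := hx2P.2.2
    constructor
    · rintro (h1 | ⟨⟨h1, h2⟩, h3⟩)
      · exact ⟨fun hz => this (hz ▸ h1), Or.inl h1⟩
      · exact ⟨h3, Or.inr ⟨h2, h1⟩⟩
    · tauto
  have hS : ∀ k, y < k → k ≤ n → F' k = (F k).erase x2 →
      Finset.range (M k + 1) \ F' k = insert x2 (Finset.range (M k + 1) \ F k) := by
    intro k h1 h2 hF
    ext z
    have : M y ≤ M k := hM h1.le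
    have := hx2P.2.1
    have := hx2F k h1 (by omega)
    simp only [hF, Finset.mem_sdiff, Finset.mem_range, Finset.mem_insert, Finset.mem_erase]
    by_cases hz : z = x2
    · subst hz
      simp; omega
    · simp [hz]
  have mid : ∀ k, y < k → k < y' → F' k = (F k).erase x2 →
      P' k = P k ∧ F' (k + 1) = (F (k + 1)).erase x2 := by
    intro k h1 h2 hF
    have hk : k ≤ n := by omega
    have hlk : x2 < l k := by
      by_contra hcon
      have hb' := hb k h1 h2
      have hx2M := hx2P.2.1
      have : l k ∈ F k := by
        apply h.F_mono (y := y + 1) h1 (by omega)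
        by_contra hcon2
        have := h.free_le hyn' (x := l k) (by omega) hcon2
        omega
      exact h.lF k hk this
    have hfil : (Finset.range (M k + 1) \ F' k).filter (l k ≤ ·) = P k := by
      rw [hS k h1 hk hF, Finset.filter_insert, if_neg (by omega), h.P_eq hk]
    have hA := hcnt k hk
    rw [if_neg (by omega), if_neg (by omega)] at hA
    have e1 : l' k = l k := by
      apply h'.l_eq hk (h.lM k hk)
      · rw [hF, Finset.mem_erase]; exact fun hh => h.lF k hk hh.2
      · rw [hfil, h.cP k hk]; omega
    have e2 : P' k = P k := by rw [h'.P_eq hk, e1, hfil]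
    refine ⟨e2, ?_⟩
    ext z
    rw [h'.hF k hk, Finset.mem_erase, h.hF k hk, e2, e1, hF, Finset.mem_erase]
    have : x2 ∉ P k := fun hh => by have := ((h.hP k hk _).1 hh).1; omega
    constructor
    · rintro (h1 | ⟨h1, h2⟩)
      · exact ⟨h1.1, Or.inl h1.2⟩
      · exact ⟨fun hz => this (hz ▸ h1), Or.inr ⟨h1, h2⟩⟩
    · tauto
  have midF : ∀ k, y + 1 ≤ k → k ≤ y' → F' k = (F k).erase x2 := by
    intro k hk
    induction k, hk using Nat.le_induction with
    | base => intro _; exact rowy.2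
    | succ k hk ih =>
      intro hk'
      exact (mid k hk hk' (ih (by omega))).2
  have rowy' : P' y' = insert x2 (P y') ∧ F' (y' + 1) = F (y' + 1) := by
    have hF := midF y' hy le_rfl
    have hfil : (Finset.range (M y' + 1) \ F' y').filter (l y' ≤ ·) = insert x2 (P y') := by
      rw [hS y' hy hyn hF, Finset.filter_insert, if_pos (by omega), h.P_eq hyn]
    have hx2F' := hx2F y' hy (by omega)
    have hnot : x2 ∉ P y' := fun hh => ((h.hP y' hyn _).1 hh).2.2 hx2F'
    have hA := hcnt y' hyn
    rw [if_neg (by omega), if_pos rfl] at hA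
    have e1 : l' y' = l y' := by
      apply h'.l_eq hyn (h.lM y' hyn)
      · rw [hF, Finset.mem_erase]; exact fun hh => h.lF y' hyn hh.2
      · rw [hfil, Finset.card_insert_of_notMem hnot, h.cP y' hyn]; omega
    have e2 : P' y' = insert x2 (P y') := by rw [h'.P_eq hyn, e1, hfil]
    refine ⟨e2, ?_⟩
    ext z
    rw [h'.hF y' hyn, h.hF y' hyn, e2, e1, hF, Finset.mem_erase, Finset.mem_insert]
    by_cases hz : z = x2
    · subst hz
      have : z ≠ l y' := by omega
      tauto
    · tauto
  have above : ∀ k, y' + 1 ≤ k → k ≤ n + 1 → F' k = F k := by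
    intro k hk
    induction k, hk using Nat.le_induction with
    | base => intro _; exact rowy'.2
    | succ k hk ih =>
      intro hk'
      refine (step_same k (by omega) (ih (by omega)) ?_).2.2
      have := hcnt k (by omega)
      rw [if_neg (by omega), if_neg (by omega)] at this
      omega
  have rows : ∀ k ≤ n, k ≠ y → k ≠ y' → P' k = P k := by
    intro k hk k1 k2
    have hA := hcnt k hk
    rw [if_neg k1, if_neg k2] at hA
    by_cases c1 : k < y
    · exact (step_same k hk (below k (by omega)) (by omega)).2.1
    by_cases c2 : k < y'
    · exact (mid k (by omega) c2 (midF k (by omega) (by omega))).1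
    · exact (step_same k hk (above k (by omega) (by omega)) (by omega)).2.1
  have hx2row : ∀ b, y < b → b ≤ n → ∀ x, l y < x → x ≤ x2 → x ∉ P b := by
    intro b h1 h2 x h3 h4 hmem
    have hx2M := hx2P.2.1
    apply ((h.hP b h2 x).1 hmem).2.2
    apply h.F_mono (y := y + 1) h1 (by omega)
    by_contra hcon2
    have := h.free_le hyn' (x := x) (by omega) hcon2
    omega
  refine ⟨_, _, l y, y, x2, y', rfl, rfl, hlx2, hy, ⟨hyn', h.l_mem hyn'⟩,
    ⟨hyn, (h.l_mem_iff hM hy hyn hb).2 hl⟩, ⟨hyn', hx2m.2⟩, ?_, ?_, ?_, ?_, ?_⟩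
  · intro b h1 h2 hmem
    exact (h.between_iff' hM (by omega)).1 hb b h1 h2 hmem.2
  · intro x h1 h2 hmem
    have := hx2min x (Finset.mem_erase.2 ⟨by omega, hmem.2⟩)
    omega
  · intro x h1 h2 hmem
    exact hx2row y' hy hyn x h1 h2.le hmem.2
  · intro b h1 h2 hmem
    exact hx2row b h1 (by omega) x2 hlx2 le_rfl hmem.2
  · ext ⟨x, k⟩
    simp only [Set.mem_ofPred_eq, Set.mem_union, Set.mem_sdiff, Set.mem_singleton_iff,
        Prod.mk.injEq]
    by_cases k1 : k = y
    · subst k1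
      rw [rowy.1, Finset.mem_erase]
      have : k ≠ y' := by omega
      tauto
    by_cases k2 : k = y'
    · subst k2
      rw [rowy'.1, Finset.mem_insert]
      tauto
    by_cases hk : k ≤ n
    · rw [rows k hk k1 k2]
      tauto
    · tauto

end Flushing

/-! ### Rows of `A_ν` -/

theorem heightAt_mono (ν : List Bool) : ∀ x y, x ≤ y → y ≤ ν.count false →
    heightAt ν x ≤ heightAt ν y := by
  induction ν with
  | nil =>
    intro x y hxy hy
    simp at hy
    subst hy
    obtain rfl : x = 0 := by omega
    rfl
  | cons s r ih =>
    intro x y hxy hy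
    cases x with
    | zero => simp [heightAt]
    | succ x =>
      obtain ⟨y, rfl⟩ : ∃ z, y = z + 1 := ⟨y - 1, by omega⟩
      cases s with
      | true =>
        simp only [heightAt]
        have := ih (x + 1) (y + 1) hxy (by simpa using hy)
        omega
      | false =>
        simp only [heightAt]
        apply ih x y (by omega)
        simp at hy
        omega

theorem heightAt_le (ν : List Bool) : ∀ x, heightAt ν x ≤ ν.count true := by
  induction ν with
  | nil => intro x; cases x <;> simp [heightAt]
  | cons s r ih =>
    intro x
    cases x with
    | zero => simp [heightAt]
    | succ x =>
      cases s with
      | true => simp only [heightAt]; have := ih (x + 1); simp; omega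
      | false => simp only [heightAt]; have := ih x; simpa using this

def maxRow (ν : List Bool) (y : ℕ) : ℕ :=
  Nat.findGreatest (fun x => heightAt ν x ≤ y) (eastSteps ν)

theorem heightAt_le_iff (ν : List Bool) {x y : ℕ} :
    (x ≤ eastSteps ν ∧ heightAt ν x ≤ y) ↔ x ≤ maxRow ν y := by
  constructor
  · rintro ⟨h1, h2⟩
    exact Nat.le_findGreatest h1 h2
  · intro h
    have h1 : maxRow ν y ≤ eastSteps ν := Nat.findGreatest_le _
    have h2 : heightAt ν (maxRow ν y) ≤ y :=
      Nat.findGreatest_spec (P := fun x => heightAt ν x ≤ y) (m := 0) (Nat.zero_le _)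
        (by simp [heightAt])
    exact ⟨h.trans h1, (heightAt_mono ν _ _ h h1).trans h2⟩

theorem maxRow_mono (ν : List Bool) : Monotone (maxRow ν) := by
  intro y z hyz
  have := (heightAt_le_iff ν (x := maxRow ν y) (y := y)).2 le_rfl
  exact (heightAt_le_iff ν).1 ⟨this.1, this.2.trans hyz⟩

theorem maxRow_top (ν : List Bool) : maxRow ν (northSteps ν) = eastSteps ν := by
  apply le_antisymm
  · exact Nat.findGreatest_le _
  · exact (heightAt_le_iff ν).1 ⟨le_rfl, heightAt_le ν _⟩

theorem mem_APts (ν : List Bool) {x y : ℕ} :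
    (x, y) ∈ APts ν ↔ x ≤ maxRow ν y ∧ y ≤ northSteps ν := by
  rw [← heightAt_le_iff]
  simp [APts, and_assoc]

theorem horiz_eq (ν : List Bool) {x y : ℕ} (h : (x, y) ∈ APts ν) :
    horiz ν (x, y) = maxRow ν y - x := by
  rw [mem_APts] at h
  unfold horiz
  apply IsGreatest.csSup_eq
  constructor
  · show (x + _, y) ∈ APts ν
    rw [mem_APts]
    exact ⟨by omega, h.2⟩
  · intro k hk
    have hk : (x + k, y) ∈ APts ν := hk
    rw [mem_APts] at hk
    omega

theorem mem_rowAvail (ν : List Bool) {x y : ℕ} : x ∈ rowAvail ν y ↔ x ≤ maxRow ν y := by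
  rw [← heightAt_le_iff]
  simp [rowAvail]

theorem rowAvail_sorted (ν : List Bool) (y : ℕ) : (rowAvail ν y).Pairwise (· > ·) := by
  unfold rowAvail
  rw [List.pairwise_reverse]
  exact List.Pairwise.filter _ List.pairwise_lt_range

/-! ### The flushing map -/

def forbAt (ν : List Bool) (c : ℕ → ℕ) : ℕ → List ℕ
  | 0 => []
  | y + 1 => forbAt ν c y ++
    (((rowAvail ν y).filter fun x => decide (x ∉ forbAt ν c y)).take (c y)).dropLast

def rowAt (ν : List Bool) (c : ℕ → ℕ) (y : ℕ) : List ℕ :=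
  ((rowAvail ν y).filter fun x => decide (x ∉ forbAt ν c y)).take (c y)

theorem mem_rflushAux (ν : List Bool) (c : ℕ → ℕ) (p : ℕ × ℕ) : ∀ k y,
    p ∈ rflushAux ν ((List.range' y k).map c) y (forbAt ν c y) ↔
      (y ≤ p.2 ∧ p.2 < y + k) ∧ p.1 ∈ rowAt ν c p.2 := by
  intro k
  induction k with
  | zero => intro y; simp [rflushAux]
  | succ k ih =>
    intro y
    rw [List.range'_succ, List.map_cons, rflushAux]
    rw [List.mem_append]
    have := ih (y + 1)
    rw [forbAt] at this
    rw [this]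
    obtain ⟨u, v⟩ := p
    simp only [List.mem_map, Prod.mk.injEq]
    by_cases hv : y = v
    · subst hv
      constructor
      · rintro (⟨a, h1, rfl, -⟩ | h)
        · exact ⟨by omega, h1⟩
        · omega
      · rintro ⟨h1, h2⟩
        exact Or.inl ⟨u, h2, rfl, rfl⟩
    · constructor
      · rintro (⟨a, h1, rfl, h2⟩ | h)
        · exact absurd h2 hv
        · exact ⟨by omega, h.2⟩
      · rintro ⟨h1, h2⟩
        exact Or.inr ⟨by omega, h2⟩

theorem Rflush_eq (ν μ : List Bool) : Rflush ν μ =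
    {p | p.2 ≤ northSteps ν ∧ p.1 ∈ (rowAt ν (pointsAtHeight μ) p.2).toFinset} := by
  ext p
  have := mem_rflushAux ν (pointsAtHeight μ) p (northSteps ν + 1) 0
  rw [← List.range_eq_range'] at this
  show p ∈ rflushAux _ _ _ _ ↔ (_ ∧ _)
  rw [forbAt] at this
  rw [this, List.mem_toFinset]
  simp

theorem take_top {L : List ℕ} (hL : L.Pairwise (· > ·)) {c : ℕ} (hc : c + 1 ≤ L.length) :
    ∃ l ∈ L, (∀ x, x ∈ L.take (c + 1) ↔ x ∈ L ∧ l ≤ x) ∧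
      (∀ x, x ∈ (L.take (c + 1)).dropLast ↔ x ∈ L.take (c + 1) ∧ x ≠ l) := by
  have hlt : c < L.length := by omega
  have e1 : L.take (c + 1) = L.take c ++ [L[c]] := by simp
  have e2 : L = L.take c ++ L[c] :: L.drop (c + 1) := by simp
  generalize L.take (c + 1) = T at *
  generalize L.take c = A at *
  generalize L[c] = l at *
  generalize L.drop (c + 1) = B at *
  subst e1
  subst e2
  rw [List.pairwise_append] at hL
  obtain ⟨h1, h2, h3⟩ := hL
  rw [List.pairwise_cons] at h2
  refine ⟨l, by simp, ?_, ?_⟩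
  · intro x
    simp only [List.mem_append, List.mem_cons, List.not_mem_nil, or_false]
    constructor
    · rintro (h | rfl)
      · exact ⟨Or.inl h, (h3 x h l (by simp)).le⟩
      · simp
    · rintro ⟨h | h | h, h'⟩
      · exact Or.inl h
      · exact Or.inr h
      · have := h2.1 x h
        omega
  · intro x
    simp only [List.dropLast_concat, List.mem_append, List.mem_cons, List.not_mem_nil, or_false]
    constructor
    · intro h
      have := h3 x h l (by simp)
      exact ⟨Or.inl h, by omega⟩
    · tauto

theorem forbAt_length (ν : List Bool) (c a : ℕ → ℕ) (n : ℕ) (hca : ∀ y ≤ n, c y = a y + 1) :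
    ∀ y ≤ n + 1, (forbAt ν c y).length ≤ ∑ k ∈ Finset.range y, a k := by
  intro y
  induction y with
  | zero => intro _; simp [forbAt]
  | succ y ih =>
    intro hy
    rw [forbAt, Finset.sum_range_succ, List.length_append, List.length_dropLast, List.length_take]
    have := ih (by omega)
    have := hca y (by omega)
    omega

theorem exists_flushing (ν : List Bool) (c a : ℕ → ℕ) (n : ℕ) (hca : ∀ y ≤ n, c y = a y + 1)
    (hcap : ∀ y ≤ n, ∑ k ∈ Finset.range (y + 1), a k ≤ maxRow ν y) :
    ∃ l, Flushing n (maxRow ν) a (fun y => (rowAt ν c y).toFinset)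
      (fun y => (forbAt ν c y).toFinset) l := by
  have key : ∀ y, ∃ l, y ≤ n → l ∈ ((rowAvail ν y).filter fun x => decide (x ∉ forbAt ν c y)) ∧
      (∀ x, x ∈ rowAt ν c y ↔
        x ∈ ((rowAvail ν y).filter fun x => decide (x ∉ forbAt ν c y)) ∧ l ≤ x) ∧
      (∀ x, x ∈ (rowAt ν c y).dropLast ↔ x ∈ rowAt ν c y ∧ x ≠ l) ∧
      (rowAt ν c y).toFinset.card = a y + 1 := by
    intro y
    by_cases hy : y ≤ n
    swap
    · exact ⟨0, fun h => absurd h hy⟩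
    have hs : ((rowAvail ν y).filter fun x => decide (x ∉ forbAt ν c y)).Pairwise (· > ·) :=
      (rowAvail_sorted ν y).filter _
    have hlen : a y + 1 ≤ ((rowAvail ν y).filter fun x => decide (x ∉ forbAt ν c y)).length := by
      have h1 : Finset.range (maxRow ν y + 1) \ (forbAt ν c y).toFinset ⊆
          ((rowAvail ν y).filter fun x => decide (x ∉ forbAt ν c y)).toFinset := by
        intro x hx
        simp only [Finset.mem_sdiff, Finset.mem_range, List.mem_toFinset] at hx
        rw [List.mem_toFinset, List.mem_filter, mem_rowAvail]
        exact ⟨by omega, by simpa using hx.2⟩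
      have h2 := Finset.card_le_card h1
      have h3 := List.toFinset_card_le
        ((rowAvail ν y).filter fun x => decide (x ∉ forbAt ν c y))
      have h4 := Finset.le_card_sdiff (forbAt ν c y).toFinset (Finset.range (maxRow ν y + 1))
      have h5 := List.toFinset_card_le (forbAt ν c y)
      have h6 := forbAt_length ν c a n hca y (by omega)
      have h7 := hcap y hy
      rw [Finset.sum_range_succ] at h7
      rw [Finset.card_range] at h4
      omega
    obtain ⟨l, h1, h2, h3⟩ := take_top hs hlen
    have e : rowAt ν c y =
      ((rowAvail ν y).filter fun x => decide (x ∉ forbAt ν c y)).take (a y + 1) := by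
      rw [rowAt, hca y hy]
    refine ⟨l, fun _ => ⟨h1, ?_, ?_, ?_⟩⟩
    · rw [e]; exact h2
    · rw [e]; exact h3
    · rw [e, List.toFinset_card_of_nodup, List.length_take, min_eq_left hlen]
      exact ((hs.sublist (List.take_sublist _ _)).imp (fun h => ne_of_gt h))
  choose l hl using key
  have hmem : ∀ y x, x ∈ ((rowAvail ν y).filter fun x => decide (x ∉ forbAt ν c y)) ↔
      x ≤ maxRow ν y ∧ x ∉ forbAt ν c y := by
    intro y x
    rw [List.mem_filter, mem_rowAvail]
    simp
  refine ⟨l, ⟨by simp [forbAt], ?_, ?_, ?_, ?_, ?_⟩⟩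
  · intro y hy
    exact ((hmem y _).1 (hl y hy).1).1
  · intro y hy
    have := ((hmem y _).1 (hl y hy).1).2
    simpa using this
  · intro y hy x
    rw [List.mem_toFinset, (hl y hy).2.1, hmem, List.mem_toFinset]
    tauto
  · intro y hy x
    have h3 := (hl y hy).2.2.1 x
    rw [rowAt] at h3
    simp only [List.mem_toFinset]
    rw [forbAt, List.mem_append, h3, rowAt]
  · intro y hy
    exact (hl y hy).2.2.2

/-! ### Paths by east steps per row -/

/-- Number of east steps at height `k`. -/
def eastRow : List Bool → ℕ → ℕ
  | [], _ => 0
  | false :: r, 0 => eastRow r 0 + 1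
  | false :: r, k + 1 => eastRow r (k + 1)
  | true :: _, 0 => 0
  | true :: r, k + 1 => eastRow r k

theorem eastRow_append (A B : List Bool) : ∀ k, eastRow (A ++ B) k =
    eastRow A k + (if A.count true ≤ k then eastRow B (k - A.count true) else 0) := by
  induction A with
  | nil => intro k; simp [eastRow]
  | cons s r ih =>
    intro k
    cases s <;> cases k <;> simp [eastRow, ih] <;> omega

theorem eastRow_gt (A : List Bool) : ∀ k, A.count true < k → eastRow A k = 0 := by
  induction A with
  | nil => intro k _; simp [eastRow]
  | cons s r ih =>
    intro k hk
    cases s <;> cases k <;> simp [eastRow] at * <;> apply ih <;> omega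

theorem sum_eastRow (A : List Bool) :
    ∑ k ∈ Finset.range (A.count true + 1), eastRow A k = A.count false := by
  induction A with
  | nil => simp [eastRow]
  | cons s r ih =>
    rw [Finset.sum_range_succ'] at *
    cases s
    · simp [eastRow] at *
      omega
    · simp [eastRow]
      rw [Finset.sum_range_succ']
      exact ih

theorem eastRow_inj (A : List Bool) : ∀ B : List Bool, A.count true = B.count true →
    (∀ k ≤ A.count true, eastRow A k = eastRow B k) → A = B := by
  induction A with
  | nil =>
    intro B h1 h2
    cases B with
    | nil => rfl
    | cons s r =>
      cases s
      · have := h2 0 (by simp); simp [eastRow] at this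
      · simp at h1
  | cons s A ih =>
    intro B h1 h2
    cases B with
    | nil =>
      cases s
      · have := h2 0 (by simp); simp [eastRow] at this
      · simp at h1
    | cons t B =>
      cases s <;> cases t
      · congr 1
        apply ih _ (by simpa using h1)
        intro k hk
        have := h2 k (by simpa using hk)
        cases k <;> simpa [eastRow] using this
      · have := h2 0 (by simp); simp [eastRow] at this
      · have := h2 0 (by simp); simp [eastRow] at this
      · congr 1
        apply ih _ (by simpa using h1)
        intro k hk
        have := h2 (k + 1) (by simpa using hk)
        simpa [eastRow] using this

theorem pointsAtHeight_cons (s : Bool) (r : List Bool) (y : ℕ) :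
    pointsAtHeight (s :: r) y = (if y = 0 then 1 else 0) +
      ((List.range (r.length + 1)).filter
        fun i => decide (((s :: r.take i).count true) = y)).length := by
  unfold pointsAtHeight
  rw [List.length_cons, List.range_succ_eq_map, List.filter_cons, List.filter_map]
  by_cases hy : y = 0
  · subst hy
    simp [Function.comp_def]
    rw [Nat.add_comm]
    congr!
  · have : ¬ (0 = y) := fun h => hy h.symm
    simp [hy, this, Function.comp_def]
    congr!

theorem pointsAtHeight_eq (A : List Bool) : ∀ k ≤ A.count true,
    pointsAtHeight A k = eastRow A k + 1 := by
  induction A with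
  | nil =>
    intro k hk
    simp at hk
    subst hk
    simp [pointsAtHeight, eastRow]
  | cons s r ih =>
    intro k hk
    rw [pointsAtHeight_cons]
    cases s
    · have := ih k (by simpa using hk)
      unfold pointsAtHeight at this
      cases k
      · simp [eastRow] at *; omega
      · simp [eastRow] at *; omega
    · cases k with
      | zero => simp [eastRow]
      | succ k =>
        have := ih k (by simpa using hk)
        unfold pointsAtHeight at this
        simp [eastRow] at *
        omega

/-- `preEast μ k` is the abscissa at which `μ` leaves row `k - 1`. -/
def preEast (μ : List Bool) (k : ℕ) : ℕ := ∑ j ∈ Finset.range k, eastRow μ j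

theorem preEast_mono (μ : List Bool) : Monotone (preEast μ) := by
  intro a b h
  unfold preEast
  exact Finset.sum_le_sum_of_subset (Finset.range_mono h)

theorem preEast_append (A B : List Bool) :
    preEast (A ++ B) (A.count true + 1) = A.count false + eastRow B 0 := by
  rw [← sum_eastRow A, preEast, Finset.sum_range_succ, Finset.sum_range_succ]
  have : ∀ k ∈ Finset.range (A.count true), eastRow (A ++ B) k = eastRow A k := by
    intro k hk
    rw [Finset.mem_range] at hk
    rw [eastRow_append, if_neg (by omega), add_zero]
  rw [Finset.sum_congr rfl this, eastRow_append]
  simp [add_assoc]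

theorem preEast_append_le (A B : List Bool) :
    preEast (A ++ B) (A.count true) ≤ A.count false := by
  rw [← sum_eastRow A, preEast, Finset.sum_range_succ]
  have : ∀ k ∈ Finset.range (A.count true), eastRow (A ++ B) k = eastRow A k := by
    intro k hk
    rw [Finset.mem_range] at hk
    rw [eastRow_append, if_neg (by omega), add_zero]
  rw [Finset.sum_congr rfl this]
  exact Nat.le_add_right _ _

theorem pointAt_le (μ : List Bool) (i : ℕ) :
    preEast μ (pointAt μ i).2 ≤ (pointAt μ i).1 ∧
      (pointAt μ i).1 ≤ preEast μ ((pointAt μ i).2 + 1) := by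
  have h1 := preEast_append (μ.take i) (μ.drop i)
  have h2 := preEast_append_le (μ.take i) (μ.drop i)
  rw [List.take_append_drop] at h1 h2
  simp only [pointAt]
  omega

theorem pointAt_add (μ : List Bool) {i : ℕ} (hi : i ≤ μ.length) :
    (pointAt μ i).1 + (pointAt μ i).2 = i := by
  have : ∀ L : List Bool, L.count false + L.count true = L.length := by
    intro L
    induction L with
    | nil => rfl
    | cons s r ih => cases s <;> simp <;> omega
  have := this (μ.take i)
  simp only [pointAt]
  rw [this, List.length_take]
  omega

theorem pointAt_mono (μ : List Bool) {i j : ℕ} (h : i ≤ j) :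
    (pointAt μ i).1 ≤ (pointAt μ j).1 ∧ (pointAt μ i).2 ≤ (pointAt μ j).2 := by
  have : (μ.take i).Sublist (μ.take j) := (List.take_prefix_take_left h).sublist
  exact ⟨this.count_le _, this.count_le _⟩

theorem pointAt_length (μ : List Bool) : pointAt μ μ.length = (eastSteps μ, northSteps μ) := by
  simp [pointAt, eastSteps, northSteps]

theorem preEast_top (μ : List Bool) : preEast μ (northSteps μ + 1) = eastSteps μ :=
  sum_eastRow μ

theorem pointAt_of_row (μ : List Bool) {x k : ℕ} (hk : k ≤ northSteps μ) (h1 : preEast μ k ≤ x)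
    (h2 : x ≤ preEast μ (k + 1)) : x + k ≤ μ.length ∧ pointAt μ (x + k) = (x, k) := by
  have hl := pointAt_add μ (le_refl μ.length)
  rw [pointAt_length] at hl
  have hm := preEast_mono μ (show k + 1 ≤ northSteps μ + 1 by omega)
  rw [preEast_top] at hm
  have hle : x + k ≤ μ.length := by omega
  refine ⟨hle, ?_⟩
  have ha := pointAt_add μ hle
  have hb := pointAt_le μ (x + k)
  generalize pointAt μ (x + k) = p at *
  obtain ⟨u, v⟩ := p
  simp only at ha hb
  rcases lt_trichotomy v k with h | h | h
  · have := preEast_mono μ (show v + 1 ≤ k by omega)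
    omega
  · subst h
    obtain rfl : u = x := by omega
    rfl
  · have := preEast_mono μ (show k + 1 ≤ v by omega)
    omega

theorem pointAt_succ (μ : List Bool) {i : ℕ} (hi : i < μ.length) :
    pointAt μ (i + 1) = ((pointAt μ i).1 + if μ[i] = false then 1 else 0,
      (pointAt μ i).2 + if μ[i] = true then 1 else 0) := by
  simp only [pointAt]
  rw [List.take_succ_eq_append_getElem hi]
  rw [List.count_append, List.count_append]
  cases μ[i] <;> simp

theorem nuPath_cap {ν μ : List Bool} (hμ : IsNuPath ν μ) : ∀ y ≤ northSteps ν,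
    preEast μ (y + 1) ≤ maxRow ν y := by
  intro y hy
  rw [← hμ.2.1] at hy
  have := pointAt_of_row μ hy (preEast_mono μ (Nat.le_succ y)) le_rfl
  have h2 := hμ.2.2 _ this.1
  rw [this.2, mem_APts] at h2
  exact h2.1

theorem eastRow_swap (A C D : List Bool) (k : ℕ) :
    eastRow (A ++ C ++ [false] ++ D) k + (if k = A.count true then 1 else 0) =
    eastRow (A ++ [false] ++ C ++ D) k + (if k = A.count true + C.count true then 1 else 0) := by
  have h1 : ∀ k, eastRow [false] k = if k = 0 then 1 else 0 := by
    intro k; cases k <;> simp [eastRow]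
  simp only [eastRow_append, h1, List.count_append]
  simp
  split_ifs <;> omega

theorem decomp (μ : List Bool) {i j : ℕ} (hi : 0 < i) (hij : i < j) (hj : j ≤ μ.length)
    (h : μ.getD (i - 1) true = false) :
    μ = μ.take (i - 1) ++ [false] ++ (μ.drop i).take (j - i) ++ μ.drop j := by
  have hlt : i - 1 < μ.length := by omega
  have e1 : μ.take (i - 1) ++ [false] = μ.take i := by
    obtain ⟨i, rfl⟩ : ∃ z, i = z + 1 := ⟨i - 1, by omega⟩
    simp only [Nat.add_sub_cancel] at *
    rw [List.take_succ_eq_append_getElem hlt]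
    rw [List.getD_eq_getElem _ _ hlt] at h
    rw [h]
  have e2 : (μ.drop i).take (j - i) ++ μ.drop j = μ.drop i := by
    have : μ.drop j = (μ.drop i).drop (j - i) := by
      rw [List.drop_drop]; congr 1; omega
    rw [this, List.take_append_drop]
  rw [e1, List.append_assoc, e2, List.take_append_drop]

theorem row_hits {n y : ℕ} {M e : ℕ → ℕ} (hM : Monotone M) (hcap : e (y + 1) ≤ M y)
    (k : ℕ) (hk : y < k) (hkn : k ≤ n)
    (hb : ∀ b, y < b → b < k → M y + e (b + 1) < M b + e (y + 1))
    (hl : M k + e (y + 1) ≤ M y + e (k + 1)) :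
    ∃ x, e k ≤ x ∧ x ≤ e (k + 1) ∧ x + M y = M k + e (y + 1) := by
  have hMk : M y ≤ M k := hM hk.le
  refine ⟨M k + e (y + 1) - M y, ?_, by omega, by omega⟩
  obtain ⟨k, rfl⟩ : ∃ z, k = z + 1 := ⟨k - 1, by omega⟩
  have h1 : M k ≤ M (k + 1) := hM (by omega)
  by_cases hky : k = y
  · subst hky; omega
  · have := hb k (by omega) (by omega)
    omega

theorem cover_iff_cov {ν μ μ' : List Bool} (hμ : IsNuPath ν μ) (hμ' : IsNuPath ν μ') :
    TamariCover ν μ μ' ↔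
      ∃ y y', Flushing.Cov (northSteps ν) (maxRow ν) (eastRow μ) (eastRow μ') y y' := by
  have hcap := nuPath_cap hμ
  have hn := hμ.2.1
  have hM := maxRow_mono ν
  have hA : ∀ i ≤ μ.length, (pointAt μ i).1 ≤ maxRow ν (pointAt μ i).2 ∧
      (pointAt μ i).2 ≤ northSteps ν ∧
      horiz ν (pointAt μ i) = maxRow ν (pointAt μ i).2 - (pointAt μ i).1 := by
    intro i hi
    have h1 := hμ.2.2 i hi
    have h2 := horiz_eq ν (x := (pointAt μ i).1) (y := (pointAt μ i).2) h1
    have h3 := (mem_APts ν (x := (pointAt μ i).1) (y := (pointAt μ i).2)).1 h1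
    exact ⟨h3.1, h3.2, h2⟩
  have hfold : ∀ k, ∑ j ∈ Finset.range k, eastRow μ j = preEast μ k := fun _ => rfl
  simp only [Flushing.Cov, hfold]
  constructor
  · rintro ⟨-, -, i, j, hi, hij, hj, hE, hN, hz, hnot, heq⟩
    have hiL : i < μ.length := by omega
    have hi1L : i - 1 < μ.length := by omega
    rw [List.getD_eq_getElem _ _ hiL] at hN
    have s1 := pointAt_succ μ hiL
    have s0 := pointAt_succ μ hi1L
    rw [List.getD_eq_getElem _ _ hi1L] at hE
    rw [hE, Nat.sub_add_cancel hi] at s0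
    rw [hN] at s1
    simp only [if_true, reduceCtorEq, if_false, add_zero] at s0 s1
    -- abscissa of point `i`
    have hx : (pointAt μ i).1 = preEast μ ((pointAt μ i).2 + 1) := by
      have h1 := (pointAt_le μ i).2
      have h2 := (pointAt_le μ (i + 1)).1
      rw [s1] at h2
      simp only at h2
      omega
    have hyy : (pointAt μ i).2 < (pointAt μ j).2 := by
      have := (pointAt_mono μ (show i + 1 ≤ j from hij)).2
      rw [s1] at this
      simp only at this
      omega
    have hd := decomp μ hi hij hj (by rw [List.getD_eq_getElem _ _ hi1L]; exact hE)
    have hy0 : (μ.take (i - 1)).count true = (pointAt μ i).2 := by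
      rw [s0]; rfl
    have hy1 : (μ.take (i - 1)).count true + ((μ.drop i).take (j - i)).count true
        = (pointAt μ j).2 := by
      have e : μ.take j = μ.take i ++ (μ.drop i).take (j - i) := by
        rw [← List.take_add]; congr 1; omega
      rw [hy0]
      simp only [pointAt]
      rw [e, List.count_append]
    have hcnt := eastRow_swap (μ.take (i - 1)) ((μ.drop i).take (j - i)) (μ.drop j)
    rw [← heq, ← hd, hy0] at hcnt
    rw [hy0] at hy1
    rw [hy1] at hcnt
    have Ai := hA i hiL.le
    have Aj := hA j hj
    rw [Ai.2.2, Aj.2.2] at hz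
    have hxj := (pointAt_le μ j).2
    have hlast : maxRow ν (pointAt μ j).2 + preEast μ ((pointAt μ i).2 + 1) ≤
        maxRow ν (pointAt μ i).2 + preEast μ ((pointAt μ j).2 + 1) := by
      omega
    refine ⟨(pointAt μ i).2, (pointAt μ j).2, hyy, Aj.2.1, ?_, ?_, hlast, fun k _ => hcnt k⟩
    · have := hcnt (pointAt μ i).2
      rw [if_pos rfl, if_neg (by omega)] at this
      omega
    · intro b
      induction b using Nat.strong_induction_on with
      | _ b ih =>
        intro hb1 hb2
        by_contra hcon
        obtain ⟨x, hx1, hx2, hx3⟩ := row_hits (n := northSteps ν) (e := preEast μ) hM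
          (hcap _ Ai.2.1) b hb1 (by omega)
          (fun b' h1 h2 => ih b' h2 h1 (by omega)) (by omega)
        obtain ⟨hkL, hk⟩ := pointAt_of_row μ (by omega) hx1 hx2
        have k1 : i < x + b := by
          by_contra hc
          have := (pointAt_mono μ (show x + b ≤ i by omega)).2
          rw [hk] at this
          simp only at this
          omega
        have k2 : x + b < j := by
          by_contra hc
          have := (pointAt_mono μ (show j ≤ x + b by omega)).2
          rw [hk] at this
          simp only at this
          omega
        apply hnot _ k1 k2
        have Ak := hA _ hkL
        rw [Ak.2.2, Ai.2.2, hk]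
        simp only
        omega
  · rintro ⟨y, y', hy, hyn, hay, hb, hl, hcnt⟩
    have hyn' : y ≤ northSteps ν := by omega
    obtain ⟨x, hx1, hx2, hx3⟩ := row_hits (e := preEast μ) hM (hcap _ hyn') y' hy hyn hb hl
    have hys : preEast μ (y + 1) = preEast μ y + eastRow μ y := Finset.sum_range_succ _ _
    obtain ⟨hiL, hip⟩ := pointAt_of_row μ (x := preEast μ (y + 1)) (k := y) (by omega)
      (by omega) le_rfl
    obtain ⟨hiL0, hip0⟩ := pointAt_of_row μ (x := preEast μ (y + 1) - 1) (k := y) (by omega)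
      (by omega) (by omega)
    obtain ⟨hjL, hjp⟩ := pointAt_of_row μ (x := x) (k := y') (by omega) hx1 hx2
    have hi0 : preEast μ (y + 1) - 1 + y = preEast μ (y + 1) + y - 1 := by omega
    rw [hi0] at hiL0 hip0
    have hipos : 0 < preEast μ (y + 1) + y := by omega
    have hcy := hcap y hyn'
    generalize hig : preEast μ (y + 1) + y = i at *
    generalize hjg : x + y' = j at *
    have hij : i < j := by
      by_contra hc
      have := (pointAt_mono μ (show j ≤ i by omega)).2
      rw [hip, hjp] at this
      simp only at this
      omega
    have hE : μ.getD (i - 1) true = false := by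
      have hlt : i - 1 < μ.length := by omega
      rw [List.getD_eq_getElem _ _ hlt]
      have s0 := pointAt_succ μ hlt
      rw [Nat.sub_add_cancel hipos, hip, hip0] at s0
      cases hh : μ[i - 1]
      · rfl
      · rw [hh] at s0; simp at s0
    have hN : μ.getD i false = true := by
      have hlt : i < μ.length := by omega
      rw [List.getD_eq_getElem _ _ hlt]
      have s0 := pointAt_succ μ hlt
      cases hh : μ[i]
      · rw [hh, hip] at s0
        have := (pointAt_le μ (i + 1)).2
        rw [s0] at this
        simp at this
      · rfl
    refine ⟨hμ, hμ', i, j, hipos, hij, hjL, hE, hN, ?_, ?_, ?_⟩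
    · rw [(hA i hiL).2.2, (hA j hjL).2.2, hip, hjp]
      simp only
      omega
    · intro k hk1 hk2
      have hkL : k ≤ μ.length := by omega
      rw [(hA i hiL).2.2, (hA k hkL).2.2, hip]
      have m1 := pointAt_mono μ hk1.le
      have m2 := pointAt_mono μ hk2.le
      have hs := pointAt_add μ hkL
      have hr := pointAt_le μ k
      rw [hip] at m1
      rw [hjp] at m2
      generalize pointAt μ k = p at *
      obtain ⟨u, v⟩ := p
      simp only at *
      by_cases v1 : v = y
      · subst v1; omega
      by_cases v2 : v = y'
      · subst v2; omega
      have := hb v (by omega) (by omega)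
      omega
    · have hd := decomp μ hipos hij hjL hE
      have hy0 : (μ.take (i - 1)).count true = y := by
        have := congrArg Prod.snd hip0
        exact this
      have hy1 : (μ.take (i - 1)).count true + ((μ.drop i).take (j - i)).count true = y' := by
        have e : μ.take j = μ.take i ++ (μ.drop i).take (j - i) := by
          rw [← List.take_add]; congr 1; omega
        have h1 := congrArg Prod.snd hjp
        have h2 := congrArg Prod.snd hip
        simp only [pointAt] at h1 h2
        rw [e, List.count_append, h2] at h1
        rw [hy0]
        exact h1
      have hsw := eastRow_swap (μ.take (i - 1)) ((μ.drop i).take (j - i)) (μ.drop j)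
      rw [hy1, hy0, ← hd] at hsw
      have hn' : μ'.count true = northSteps ν := hμ'.2.1
      apply eastRow_inj
      · have e1 : μ.count true = northSteps ν := hn
        rw [hn', ← e1]
        conv_lhs => rw [hd]
        simp only [List.count_append]
        simp
      · intro k hk
        have h1 := hcnt k (by omega)
        have h2 := hsw k
        omega

theorem tamariCover_iff_rotation (ν : List Bool) (μ μ' : List Bool)
    (hμ : IsNuPath ν μ) (hμ' : IsNuPath ν μ') :
    TamariCover ν μ μ' ↔ IsRightRotation (Rflush ν μ) (Rflush ν μ') := by
  have fl : ∀ μ, IsNuPath ν μ → ∃ l, Flushing (northSteps ν) (maxRow ν) (eastRow μ)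
      (fun y => (rowAt ν (pointsAtHeight μ) y).toFinset)
      (fun y => (forbAt ν (pointsAtHeight μ) y).toFinset) l := by
    intro μ h
    refine exists_flushing ν _ _ _ ?_ (nuPath_cap h)
    intro y hy
    apply pointsAtHeight_eq
    rw [← h.2.1] at hy
    exact hy
  obtain ⟨l, hl⟩ := fl μ hμ
  obtain ⟨l', hl'⟩ := fl μ' hμ'
  rw [cover_iff_cov hμ hμ', Rflush_eq, Rflush_eq]
  constructor
  · rintro ⟨y, y', hc⟩
    exact hl.rot_of_cov hl' (maxRow_mono ν) hc
  · intro h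
    exact hl.cov_of_rot hl' (maxRow_mono ν) h
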